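/- Let n be a natural number and let s be the outmap of a unique sink orientation (USO) of the n-dimensional hypercube. Then there exists a natural number l with 1 ≤ l ≤ 2^n such that the l-fold iterate of s applied to the empty set equals the empty set: s^[l](∅) = ∅. -/

import Mathlib

/-- An outmap `s` is the outmap of an orientation of the `n`-cube if for every
vertex `v` and every direction `lam`, the `lam`-edge at `v` is outgoing at `v`
iff it is incoming at the neighbor `v Δ {lam}`. -/
def IsOrientation (n : ℕ) (s : Finset (Fin n) → Finset (Fin n)) : Prop :=
  ∀ (v : Finset (Fin n)) (lam : Fin n), lam ∈ s v ↔ lam ∉ s (symmDiff v {lam})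

/-- An outmap `s` is a unique sink orientation (USO) of the `n`-cube if it is
the outmap of an orientation and every subcube `[u : w]` has a unique sink. -/
def IsUSO (n : ℕ) (s : Finset (Fin n) → Finset (Fin n)) : Prop :=
  IsOrientation n s ∧
    ∀ u w : Finset (Fin n), u ⊆ w →
      ∃! x : Finset (Fin n), u ⊆ x ∧ x ⊆ w ∧ s x ∩ (w \ u) = ∅

/-!
Complementing one coordinate `a` of the outmap, i.e. reversing all `a`-edges of the cube, preserves
unique sinks: a subcube spanning direction `a` has two facets orthogonal to it, each with its own
sink, and the sink of the subcube is the facet sink whose `a`-edge is incoming; after the reversal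
it is the other one. Hence `v ↦ s v ∆ L` has unique sinks for every `L`, and its sink in the whole
cube is the only solution of `s v = L`. So `s` is a permutation of the `2 ^ n` vertices.
-/

open scoped symmDiff

theorem existsUnique_eq_or_eq_and_not {β : Type*} {p : β → Prop} {x y : β} (hxy : x ≠ y)
    (h : ∃! z, (z = x ∨ z = y) ∧ p z) : ∃! z, (z = x ∨ z = y) ∧ ¬p z := by
  obtain ⟨z, ⟨rfl | rfl, hz⟩, hunique⟩ := h
  · have hy : ¬p y := fun hpy => hxy.symm (hunique y ⟨.inr rfl, hpy⟩)
    exact ⟨y, ⟨.inr rfl, hy⟩, by grind⟩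
  · have hx : ¬p x := fun hpx => hxy (hunique x ⟨.inl rfl, hpx⟩)
    exact ⟨x, ⟨.inl rfl, hx⟩, by grind⟩

section UniqueSinks

variable {α : Type*} [DecidableEq α] {s : Finset α → Finset α} {u w x : Finset α} {a : α}

/-- `x` is a sink of the subcube `[u, w]`: it lies in the subcube and none of the directions
`w \ u` spanned by the subcube is outgoing at `x`. -/
def IsSubcubeSink (s : Finset α → Finset α) (u w x : Finset α) : Prop :=
  u ⊆ x ∧ x ⊆ w ∧ s x ∩ (w \ u) = ∅

/-- The unique sink property of an outmap on the cube of finite subsets of `α`, where `α` may be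
infinite. -/
def HasUniqueSinks (s : Finset α → Finset α) : Prop :=
  ∀ u w, u ⊆ w → ∃! x, IsSubcubeSink s u w x

theorem isSubcubeSink_iff_facet (ha : a ∈ w \ u) :
    IsSubcubeSink s u w x ↔
      (IsSubcubeSink s u (w.erase a) x ∨ IsSubcubeSink s (insert a u) w x) ∧ a ∉ s x := by
  have hinter : s x ∩ (w \ u) = ∅ ↔ s x ∩ (w \ u).erase a = ∅ ∧ a ∉ s x := by
    rw [← Finset.insert_erase ha, Finset.erase_insert (Finset.notMem_erase a _),
      ← Finset.disjoint_iff_inter_eq_empty, ← Finset.disjoint_iff_inter_eq_empty,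
      Finset.disjoint_insert_right, and_comm]
  simp only [IsSubcubeSink, Finset.erase_sdiff_comm, Finset.sdiff_insert, hinter,
    Finset.subset_erase, Finset.insert_subset_iff]
  tauto

theorem isSubcubeSink_symmDiff_singleton_iff (ha : a ∉ w \ u) :
    IsSubcubeSink (fun v => s v ∆ {a}) u w x ↔ IsSubcubeSink s u w x := by
  have hdisj : Disjoint {a} (w \ u) := Finset.disjoint_singleton_left.mpr ha
  have hinter : s x ∆ {a} ∩ (w \ u) = s x ∩ (w \ u) := by
    rw [← Finset.inf_eq_inter, inf_symmDiff_distrib_right, hdisj.eq_bot, symmDiff_bot,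
      Finset.inf_eq_inter]
  simp only [IsSubcubeSink, hinter]

theorem isSubcubeSink_symmDiff_singleton_iff_facet (ha : a ∈ w \ u) :
    IsSubcubeSink (fun v => s v ∆ {a}) u w x ↔
      (IsSubcubeSink s u (w.erase a) x ∨ IsSubcubeSink s (insert a u) w x) ∧ a ∈ s x := by
  have hlower : a ∉ w.erase a \ u := by simp
  have hupper : a ∉ w \ insert a u := by simp
  rw [isSubcubeSink_iff_facet ha, isSubcubeSink_symmDiff_singleton_iff hlower,
    isSubcubeSink_symmDiff_singleton_iff hupper]
  simp [Finset.mem_symmDiff]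

namespace HasUniqueSinks

theorem symmDiff_singleton (hs : HasUniqueSinks s) (a : α) :
    HasUniqueSinks fun v => s v ∆ {a} := by
  intro u w huw
  by_cases ha : a ∈ w \ u
  · obtain ⟨haw, hau⟩ := Finset.mem_sdiff.mp ha
    obtain ⟨lower, hlower, hlower_unique⟩ :=
      hs u (w.erase a) (Finset.subset_erase.mpr ⟨huw, hau⟩)
    obtain ⟨upper, hupper, hupper_unique⟩ := hs (insert a u) w (Finset.insert_subset haw huw)
    have hne : lower ≠ upper := by
      rintro rfl
      exact Finset.notMem_erase a w (hlower.2.1 (hupper.1 (Finset.mem_insert_self a u)))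
    have hfacet (x : Finset α) :
        IsSubcubeSink s u (w.erase a) x ∨ IsSubcubeSink s (insert a u) w x ↔
          x = lower ∨ x = upper :=
      or_congr ⟨hlower_unique x, fun h => h ▸ hlower⟩ ⟨hupper_unique x, fun h => h ▸ hupper⟩
    simp only [isSubcubeSink_symmDiff_singleton_iff_facet ha, hfacet]
    have hsink : ∃! x, (x = lower ∨ x = upper) ∧ a ∉ s x := by
      simpa only [isSubcubeSink_iff_facet ha, hfacet] using hs u w huw
    simpa only [not_not] using existsUnique_eq_or_eq_and_not hne hsink
  · simpa only [isSubcubeSink_symmDiff_singleton_iff ha] using hs u w huw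

theorem symmDiff_const (hs : HasUniqueSinks s) (L : Finset α) :
    HasUniqueSinks fun v => s v ∆ L := by
  induction L using Finset.induction_on with
  | empty => simpa only [← Finset.bot_eq_empty, symmDiff_bot] using hs
  | insert a L ha ih =>
    have hinsert : insert a L = L ∆ {a} := by
      rw [(Finset.disjoint_singleton_right.mpr ha).symmDiff_eq_sup, Finset.sup_eq_union,
        Finset.union_singleton]
    simpa only [hinsert, symmDiff_assoc] using ih.symmDiff_singleton a

theorem bijective [Finite α] (hs : HasUniqueSinks s) : Function.Bijective s := by
  have := Fintype.ofFinite α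
  rw [Function.bijective_iff_existsUnique]
  intro L
  have hsink (x : Finset α) : IsSubcubeSink (fun v => s v ∆ L) ∅ Finset.univ x ↔ s x = L := by
    simp [IsSubcubeSink, ← Finset.bot_eq_empty]
  simpa only [hsink] using hs.symmDiff_const L ∅ Finset.univ (Finset.empty_subset _)

end HasUniqueSinks

theorem IsUSO.hasUniqueSinks {n : ℕ} {s : Finset (Fin n) → Finset (Fin n)} (hs : IsUSO n s) :
    HasUniqueSinks s :=
  hs.2

theorem uso_iterate_empty_returns_general [Fintype α] (hs : HasUniqueSinks s) (v : Finset α) :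
    ∃ l : ℕ, 1 ≤ l ∧ l ≤ 2 ^ Fintype.card α ∧ s^[l] v = v := by
  have hperiodic : v ∈ Function.periodicPts s := hs.bijective.injective.mem_periodicPts v
  refine ⟨Function.minimalPeriod s v, Function.minimalPeriod_pos_of_mem_periodicPts hperiodic, ?_,
    Function.iterate_minimalPeriod⟩
  exact Function.minimalPeriod_le_card.trans_eq Fintype.card_finset

end UniqueSinks

/-- The sequence of iterates of a USO outmap starting at the empty set returns
to the empty set after at most 2^n steps. -/
theorem uso_iterate_empty_returns (n : ℕ)
    (s : Finset (Fin n) → Finset (Fin n)) (hs : IsUSO n s) :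
    ∃ l : ℕ, 1 ≤ l ∧ l ≤ 2 ^ n ∧ s^[l] ∅ = ∅ := by
  simpa only [Fintype.card_fin] using uso_iterate_empty_returns_general hs.hasUniqueSinks ∅
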